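/- Let Z^{2⁴4⁴}(τ,z) = 2·(η(2τ)⁸/η(4τ)⁴)·φ_{−2,1}(τ,z) be the twined elliptic genus for the M₂₄ class 4a. Then for all τ ∈ ℍ and z ∈ ℂ, exp(−8πi z²/(4τ+1)) · Z^{2⁴4⁴}( τ/(4τ+1), z/(4τ+1) ) = −Z^{2⁴4⁴}(τ,z); that is, the slash of Z^{2⁴4⁴} by the matrix M_{1/4} = (1,0;4,1) representing the width-one cusp 1/4 of Γ₀(8) equals −Z^{2⁴4⁴}. -/

import Mathlib

/-!
`φ_{−2,1} = θ₁² / η⁶` is invariant under the weight `-2`, index `1` Jacobi slash by all of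
`SL₂(ℤ)`, since `S` and `T` generate and the multipliers of `θ₁²` and `η⁶` at `S` and `T` agree. The
sign comes from the eta quotient alone: `(1,0;n,1) = S T⁻ⁿ S⁻¹` acts on `η²` with the same
multiplier `e^{−πin/6}` as `T⁻ⁿ`, and for the matrix `(1,0;4,1)` one has `n = 2` for `η(2τ)` and
`n = 1` for `η(4τ)`, so that `η(2τ)⁸ / η(4τ)⁴` picks up the factor
`(e^{−πi/3})⁴ / (e^{−πi/6})² = -1`.
-/

open Complex


/-- The Dedekind eta function. -/
noncomputable def Eta (τ : ℂ) : ℂ :=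
  Complex.exp (Real.pi * I * τ / 12) *
    ∏' n : ℕ, (1 - Complex.exp (2 * Real.pi * I * ((n : ℂ) + 1) * τ))

noncomputable def θ₁ (τ z : ℂ) : ℂ :=
  -I * ∑' n : ℤ, (-1 : ℂ) ^ n *
    Complex.exp (Real.pi * I * ((n : ℂ) + 1 / 2) ^ 2 * τ + (2 * (n : ℂ) + 1) * Real.pi * I * z)

noncomputable def θ₂ (τ z : ℂ) : ℂ :=
  ∑' n : ℤ,
    Complex.exp (Real.pi * I * ((n : ℂ) + 1 / 2) ^ 2 * τ + (2 * (n : ℂ) + 1) * Real.pi * I * z)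

noncomputable def θ₃ (τ z : ℂ) : ℂ :=
  ∑' n : ℤ, Complex.exp (Real.pi * I * (n : ℂ) ^ 2 * τ + 2 * (n : ℂ) * Real.pi * I * z)

noncomputable def θ₄ (τ z : ℂ) : ℂ :=
  ∑' n : ℤ, (-1 : ℂ) ^ n *
    Complex.exp (Real.pi * I * (n : ℂ) ^ 2 * τ + 2 * (n : ℂ) * Real.pi * I * z)

/-- The weak Jacobi form φ_{0,1}. -/
noncomputable def φ01 (τ z : ℂ) : ℂ :=
  4 * ((θ₂ τ z / θ₂ τ 0) ^ 2 + (θ₃ τ z / θ₃ τ 0) ^ 2 + (θ₄ τ z / θ₄ τ 0) ^ 2)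

/-- The weak Jacobi form φ_{−2,1}. -/
noncomputable def φm21 (τ z : ℂ) : ℂ := θ₁ τ z ^ 2 / Eta τ ^ 6

/-- Twined elliptic genus for the class 4a (cycle shape 2^4 4^4). -/
noncomputable def Z4a (τ z : ℂ) : ℂ :=
  2 * (Eta (2 * τ) ^ 8 / Eta (4 * τ) ^ 4) * φm21 τ z

open UpperHalfPlane hiding I
open ModularGroup EisensteinSeries
open scoped MatrixGroups ModularForm Real

section JacobiSlash

/-- The slash `φ|_{k,m} γ` of weight `k` and index `m` on functions of a modular variable `τ` and an
elliptic variable `z`. Only the action of `SL₂(ℤ)` is encoded, not that of the Heisenberg group;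
Mathlib's `EisensteinSeries.D2 γ τ` is `2πic / (cτ + d)`. -/
noncomputable def jacobiSlash (k m : ℤ) (γ : SL(2, ℤ)) (φ : ℍ → ℂ → ℂ) (τ : ℍ) (z : ℂ) : ℂ :=
  denom γ τ ^ (-k) * exp (-(m * D2 γ τ * z ^ 2)) * φ (γ • τ) (z / denom γ τ)

variable {k l m : ℤ}

theorem jacobiSlash_one (φ : ℍ → ℂ → ℂ) : jacobiSlash k m 1 φ = φ := by
  ext τ z
  simp [jacobiSlash]

theorem denom_mul_eq (γ δ : SL(2, ℤ)) (τ : ℍ) :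
    denom ↑(γ * δ) τ = denom γ ↑(δ • τ) * denom δ τ := by
  simpa [σ] using! denom_cocycle_σ (γ : GL (Fin 2) ℝ) δ τ

theorem jacobiSlash_mul (γ δ : SL(2, ℤ)) (φ : ℍ → ℂ → ℂ) :
    jacobiSlash k m (γ * δ) φ = jacobiSlash k m δ (jacobiSlash k m γ φ) := by
  ext τ z
  have hD2 : D2 (γ * δ) τ = D2 γ (δ • τ) * denom δ τ ^ (-2 : ℤ) + D2 δ τ := by
    rw [D2_mul, Pi.add_apply, ModularForm.SL_slash_apply]
  have hexp : exp (-(m * D2 (γ * δ) τ * z ^ 2)) =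
      exp (-(m * D2 δ τ * z ^ 2)) * exp (-(m * D2 γ (δ • τ) * (z / denom δ τ) ^ 2)) := by
    rw [hD2, ← exp_add, zpow_neg, zpow_ofNat]
    ring_nf
  simp only [jacobiSlash]
  rw [hexp, denom_mul_eq, mul_zpow, mul_smul, div_div, mul_comm (denom δ τ)]
  ring

theorem jacobiSlash_eq_self_of_generators {φ : ℍ → ℂ → ℂ} (hS : jacobiSlash k m S φ = φ)
    (hT : jacobiSlash k m T φ = φ) (γ : SL(2, ℤ)) : jacobiSlash k m γ φ = φ := by
  have hγ : γ ∈ Subgroup.closure {S, T} := by simp [SpecialLinearGroup.SL2Z_generators]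
  induction hγ using Subgroup.closure_induction with
  | mem δ hδ => rcases hδ with rfl | rfl <;> assumption
  | one => exact jacobiSlash_one φ
  | mul δ ε _ _ hδ hε => rw [jacobiSlash_mul, hδ, hε]
  | inv δ _ hδ => nth_rw 1 [← hδ, ← jacobiSlash_mul, mul_inv_cancel, jacobiSlash_one]

theorem mul_jacobiSlash (γ : SL(2, ℤ)) (f : ℍ → ℂ) (φ : ℍ → ℂ → ℂ) :
    jacobiSlash (k + l) m γ (fun τ z ↦ f τ * φ τ z) =
      fun τ z ↦ (f ∣[k] γ) τ * jacobiSlash l m γ φ τ z := by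
  ext τ z
  simp only [jacobiSlash, ModularForm.SL_slash_apply, neg_add, zpow_add₀ (denom_ne_zero γ τ)]
  ring

end JacobiSlash

section ModularGroup

theorem coe_S_smul (τ : ℍ) : (↑(S • τ) : ℂ) = -1 / τ := by
  rw [coe_specialLinearGroup_apply]
  simp [coe_S]

theorem denom_T_zpow (n : ℤ) (τ : ℍ) : denom ↑(T ^ n) τ = 1 := by
  rw [denom_apply]
  simp [coe_T_zpow]

theorem coe_T_zpow_smul (n : ℤ) (τ : ℍ) : (↑(T ^ n • τ) : ℂ) = τ + n := by
  rw [modular_T_zpow_smul, coe_vadd, ofReal_intCast, add_comm]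

/-- The matrix `(1,0;n,1)`; for `n = 4` it is `M_{1/4}`, which maps the cusp `∞` to `1/4`. -/
def lowerUnipotent (n : ℤ) : SL(2, ℤ) := ⟨!![1, 0; n, 1], by simp⟩

theorem S_mul_T_zpow_neg_mul_S_inv (n : ℤ) : S * T ^ (-n) * S⁻¹ = lowerUnipotent n := by
  ext i j
  fin_cases i <;> fin_cases j <;>
    simp [lowerUnipotent, coe_S, coe_T_zpow, Matrix.mul_apply, Matrix.adjugate_fin_two]

theorem denom_lowerUnipotent (n : ℤ) (τ : ℍ) : denom (lowerUnipotent n) τ = n * τ + 1 := by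
  rw [denom_apply]
  simp [lowerUnipotent]

theorem coe_lowerUnipotent_smul (n : ℤ) (τ : ℍ) :
    (↑(lowerUnipotent n • τ) : ℂ) = τ / (n * τ + 1) := by
  rw [coe_specialLinearGroup_apply]
  simp [lowerUnipotent]

theorem D2_lowerUnipotent (n : ℤ) (τ : ℍ) :
    D2 (lowerUnipotent n) τ = 2 * π * I * n / (n * τ + 1) := by
  rw [D2, denom_lowerUnipotent]
  simp [lowerUnipotent]

theorem int_mul_add_one_ne_zero {τ : ℂ} (hτ : 0 < τ.im) (n : ℤ) : n * τ + 1 ≠ 0 := by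
  rw [← denom_lowerUnipotent n ⟨τ, hτ⟩]
  exact denom_ne_zero _ _

theorem slash_conj_eq_smul {f : ℍ → ℂ} {k : ℤ} {γ δ : SL(2, ℤ)} {c d : ℂ}
    (hγ : f ∣[k] γ = c • f) (hδ : f ∣[k] δ = d • f) : f ∣[k] (γ * δ * γ⁻¹) = d • f := by
  calc f ∣[k] (γ * δ * γ⁻¹) = d • (c • f) ∣[k] γ⁻¹ := by
        rw [SlashAction.slash_mul, SlashAction.slash_mul, hγ, ModularForm.SL_smul_slash, hδ,
          smul_comm, ModularForm.SL_smul_slash]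
    _ = d • f := by rw [← hγ, ← SlashAction.slash_mul, mul_inv_cancel, SlashAction.slash_one]

end ModularGroup

section Eta

theorem Eta_eq_modularForm_eta (τ : ℂ) : Eta τ = ModularForm.eta τ := by
  simp_rw [Eta, ModularForm.eta, Function.Periodic.qParam, ModularForm.eta_q_eq_cexp]
  congr 2
  push_cast
  ring

theorem Eta_add_int (τ : ℂ) (n : ℤ) : Eta (τ + n) = exp (π * I * n / 12) * Eta τ := by
  have hfactor (j : ℕ) :
      exp (2 * π * I * ((j : ℂ) + 1) * (τ + n)) = exp (2 * π * I * ((j : ℂ) + 1) * τ) :=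
    exp_eq_exp_iff_exists_int.mpr ⟨(j + 1) * n, by push_cast; ring⟩
  simp_rw [Eta, hfactor, ← mul_assoc, ← exp_add]
  ring_nf

theorem Eta_neg_one_div_sq {τ : ℂ} (hτ : 0 < τ.im) :
    Eta (-1 / τ) ^ 2 = -I * τ * Eta τ ^ 2 := by
  have hsqrt_sq (w : ℂ) : sqrt w ^ 2 = w := by simp [sqrt]
  have hS : ModularForm.eta (-1 / τ) = (sqrt I)⁻¹ * (sqrt τ * ModularForm.eta τ) :=
    ModularForm.eta_comp_eq_csqrt_I_inv hτ
  rw [Eta_eq_modularForm_eta, Eta_eq_modularForm_eta, hS, mul_pow, mul_pow, inv_pow, hsqrt_sq,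
    hsqrt_sq, inv_I, mul_assoc]

theorem Eta_sq_slash_S :
    (fun τ : ℍ ↦ Eta τ ^ 2) ∣[(1 : ℤ)] S = -I • fun τ : ℍ ↦ Eta τ ^ 2 := by
  ext τ
  have hτ := τ.ne_zero
  rw [ModularForm.SL_slash_apply, coe_S_smul, denom_S, Pi.smul_apply,
    Eta_neg_one_div_sq τ.im_pos, zpow_neg_one, smul_eq_mul]
  field_simp

theorem Eta_sq_slash_T_zpow (n : ℤ) :
    (fun τ : ℍ ↦ Eta τ ^ 2) ∣[(1 : ℤ)] (T ^ n) =
      exp (π * I * n / 6) • fun τ : ℍ ↦ Eta τ ^ 2 := by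
  ext τ
  have hexp : exp (π * I * n / 12) ^ 2 = exp (π * I * n / 6) := by
    rw [← exp_nat_mul]
    ring_nf
  rw [ModularForm.SL_slash_apply, denom_T_zpow, coe_T_zpow_smul, Eta_add_int, mul_pow, hexp,
    one_zpow, mul_one, Pi.smul_apply, smul_eq_mul]

theorem Eta_sq_slash_lowerUnipotent (n : ℤ) :
    (fun τ : ℍ ↦ Eta τ ^ 2) ∣[(1 : ℤ)] lowerUnipotent n =
      exp (-(π * I * n / 6)) • fun τ : ℍ ↦ Eta τ ^ 2 := by
  rw [← S_mul_T_zpow_neg_mul_S_inv, slash_conj_eq_smul Eta_sq_slash_S (Eta_sq_slash_T_zpow (-n))]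
  push_cast
  ring_nf

theorem Eta_div_int_mul_add_one_sq {τ : ℂ} (hτ : 0 < τ.im) (n : ℤ) :
    Eta (τ / (n * τ + 1)) ^ 2 = exp (-(π * I * n / 6)) * (n * τ + 1) * Eta τ ^ 2 := by
  have hslash := congrFun (Eta_sq_slash_lowerUnipotent n) ⟨τ, hτ⟩
  rw [ModularForm.SL_slash_apply, coe_lowerUnipotent_smul, denom_lowerUnipotent, zpow_neg_one,
    ← div_eq_mul_inv, div_eq_iff (int_mul_add_one_ne_zero hτ n)] at hslash
  rw [hslash, Pi.smul_apply, smul_eq_mul]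
  ring

/-- The eta quotient `η(2τ)⁸ / η(4τ)⁴`, the modular factor of `Z4a`. -/
noncomputable def etaQuotient4a (τ : ℂ) : ℂ := Eta (2 * τ) ^ 8 / Eta (4 * τ) ^ 4

theorem etaQuotient4a_div_four_mul_add_one {τ : ℂ} (hτ : 0 < τ.im) :
    etaQuotient4a (τ / (4 * τ + 1)) = -(4 * τ + 1) ^ 2 * etaQuotient4a τ := by
  have h2 := Eta_div_int_mul_add_one_sq (τ := 2 * τ) (by simpa using hτ) 2
  have h4 := Eta_div_int_mul_add_one_sq (τ := 4 * τ) (by simpa using hτ) 1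
  have hmul : exp (-(π * I * (2 : ℤ) / 6)) ^ 4 = -exp (-(π * I * (1 : ℤ) / 6)) ^ 2 := by
    rw [← exp_nat_mul, ← exp_nat_mul, ← exp_sub_pi_mul_I]
    push_cast
    ring_nf
  have hdenom : 4 * τ + 1 ≠ 0 := mod_cast int_mul_add_one_ne_zero hτ 4
  rw [show 2 * τ / ((2 : ℤ) * (2 * τ) + 1) = 2 * (τ / (4 * τ + 1)) by push_cast; ring_nf] at h2
  rw [show 4 * τ / ((1 : ℤ) * (4 * τ) + 1) = 4 * (τ / (4 * τ + 1)) by push_cast; ring_nf] at h4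
  calc etaQuotient4a (τ / (4 * τ + 1))
      = (Eta (2 * (τ / (4 * τ + 1))) ^ 2) ^ 4 / (Eta (4 * (τ / (4 * τ + 1))) ^ 2) ^ 2 := by
        rw [etaQuotient4a, ← pow_mul, ← pow_mul]
    _ = -(4 * τ + 1) ^ 2 * etaQuotient4a τ := by
        have hexp := exp_ne_zero (-(π * I * (1 : ℤ) / 6))
        rw [h2, h4, etaQuotient4a, mul_pow, mul_pow, mul_pow, mul_pow, hmul]
        generalize exp (-(π * I * (1 : ℤ) / 6)) = u at hexp ⊢
        rw [show ((2 : ℤ) * (2 * τ) + 1 : ℂ) = 4 * τ + 1 by push_cast; ring, Int.cast_one, one_mul]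
        field_simp

theorem etaQuotient4a_slash_lowerUnipotent_four :
    (fun τ : ℍ ↦ etaQuotient4a τ) ∣[(2 : ℤ)] lowerUnipotent 4 = -fun τ : ℍ ↦ etaQuotient4a τ := by
  ext τ
  have hdenom := int_mul_add_one_ne_zero τ.im_pos 4
  rw [ModularForm.SL_slash_apply, coe_lowerUnipotent_smul, denom_lowerUnipotent]
  push_cast at hdenom ⊢
  rw [etaQuotient4a_div_four_mul_add_one τ.im_pos, Pi.neg_apply]
  field_simp

end Eta

section Theta

theorem θ₁_add_one (τ z : ℂ) : θ₁ (τ + 1) z = exp (π * I / 4) * θ₁ τ z := by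
  unfold θ₁
  rw [mul_left_comm, ← tsum_mul_left (a := exp _)]
  refine congrArg (-I * ·) (tsum_congr fun n ↦ ?_)
  rw [mul_left_comm, ← exp_add]
  congr 1
  obtain ⟨k, hk⟩ := even_iff_exists_two_mul.mp (Int.even_mul_succ_self n)
  have hk' : (n : ℂ) * (n + 1) = 2 * k := by exact_mod_cast hk
  refine exp_eq_exp_iff_exists_int.mpr ⟨k, ?_⟩
  linear_combination (π * I : ℂ) * hk'

theorem θ₁_eq_jacobiTheta₂ (τ z : ℂ) :
    θ₁ τ z = -I * (exp (π * I * τ / 4 + π * I * z) * jacobiTheta₂ (z + 1 / 2 + τ / 2) τ) := by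
  unfold θ₁ jacobiTheta₂
  rw [← tsum_mul_left (a := exp _)]
  refine congrArg (-I * ·) (tsum_congr fun n ↦ ?_)
  rw [jacobiTheta₂_term, ← exp_pi_mul_I, ← exp_int_mul, ← exp_add, ← exp_add]
  ring_nf

theorem jacobiTheta₂_half_period_functional_equation {τ : ℂ} (hτ : τ ≠ 0) (z : ℂ) :
    jacobiTheta₂ (z + 1 / 2 + τ / 2) τ = 1 / (-I * τ) ^ (1 / 2 : ℂ) *
      exp (-π * I * (z - 1 / 2 + τ / 2) ^ 2 / τ) *
        jacobiTheta₂ (z / τ + 1 / 2 + -1 / τ / 2) (-1 / τ) := by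
  rw [show z + 1 / 2 + τ / 2 = z - 1 / 2 + τ / 2 + 1 by ring, jacobiTheta₂_add_left,
    jacobiTheta₂_functional_equation]
  congr 2
  field_simp
  ring

theorem θ₁_neg_one_div {τ : ℂ} (hτ : τ ≠ 0) (z : ℂ) :
    θ₁ (-1 / τ) (z / τ) =
      -I * (-I * τ) ^ (1 / 2 : ℂ) * exp (π * I * z ^ 2 / τ) * θ₁ τ z := by
  have hexp : exp (π * I * (-1 / τ) / 4 + π * I * (z / τ)) * exp (π / 2 * I) =
      exp (π * I * z ^ 2 / τ) * exp (π * I * τ / 4 + π * I * z) *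
        exp (-π * I * (z - 1 / 2 + τ / 2) ^ 2 / τ) := by
    simp_rw [← exp_add]
    congr 1
    field_simp
    ring
  have hroot : (-I * τ) ^ (1 / 2 : ℂ) ≠ 0 := by simp [cpow_eq_zero_iff, hτ]
  rw [exp_pi_div_two_mul_I] at hexp
  rw [θ₁_eq_jacobiTheta₂, θ₁_eq_jacobiTheta₂ τ z,
    jacobiTheta₂_half_period_functional_equation hτ]
  generalize exp (π * I * z ^ 2 / τ) = u at hexp ⊢
  generalize exp (π * I * τ / 4 + π * I * z) = v at hexp ⊢
  generalize exp (-π * I * (z - 1 / 2 + τ / 2) ^ 2 / τ) = w at hexp ⊢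
  generalize exp (π * I * (-1 / τ) / 4 + π * I * (z / τ)) = t at hexp ⊢
  generalize (-I * τ) ^ (1 / 2 : ℂ) = r at hroot ⊢
  generalize jacobiTheta₂ (z / τ + 1 / 2 + -1 / τ / 2) (-1 / τ) = J
  field_simp
  linear_combination J * I * hexp - t * J * I_sq

theorem θ₁_neg_one_div_sq {τ : ℂ} (hτ : τ ≠ 0) (z : ℂ) :
    θ₁ (-1 / τ) (z / τ) ^ 2 = I * τ * exp (2 * π * I * z ^ 2 / τ) * θ₁ τ z ^ 2 := by
  have hroot : ((-I * τ) ^ (1 / 2 : ℂ)) ^ 2 = -I * τ := by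
    rw [← cpow_nat_mul]
    norm_num
  have hexp : exp (π * I * z ^ 2 / τ) ^ 2 = exp (2 * π * I * z ^ 2 / τ) := by
    rw [← exp_nat_mul]
    ring_nf
  rw [θ₁_neg_one_div hτ]
  simp only [mul_pow, hroot, hexp, neg_sq, I_sq]
  ring

end Theta

section WeakJacobiForm

theorem φm21_add_one (τ z : ℂ) : φm21 (τ + 1) z = φm21 τ z := by
  have hθ : exp (π * I / 4) ^ 2 = exp (π / 2 * I) := by
    rw [← exp_nat_mul]
    ring_nf
  have hη : exp (π * I / 12) ^ 6 = exp (π / 2 * I) := by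
    rw [← exp_nat_mul]
    ring_nf
  have hEta : Eta (τ + 1) = exp (π * I / 12) * Eta τ := by simpa using Eta_add_int τ 1
  rw [φm21, φm21, θ₁_add_one, hEta, mul_pow, mul_pow, hθ, hη, mul_div_mul_left _ _ (exp_ne_zero _)]

theorem φm21_neg_one_div {τ : ℂ} (hτ : 0 < τ.im) (z : ℂ) :
    φm21 (-1 / τ) (z / τ) = exp (2 * π * I * z ^ 2 / τ) / τ ^ 2 * φm21 τ z := by
  have hτ0 : τ ≠ 0 := by rintro rfl; simp at hτ
  have hEta : Eta (-1 / τ) ^ 6 = I * τ ^ 3 * Eta τ ^ 6 := by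
    rw [show 6 = 2 * 3 from rfl, pow_mul, Eta_neg_one_div_sq hτ, pow_mul]
    linear_combination (-I * τ ^ 3 * Eta τ ^ 6) * I_sq
  rw [φm21, φm21, θ₁_neg_one_div_sq hτ0, hEta]
  field_simp

theorem jacobiSlash_φm21 (γ : SL(2, ℤ)) :
    jacobiSlash (-2) 1 γ (fun τ : ℍ ↦ φm21 τ) = fun τ : ℍ ↦ φm21 τ := by
  refine jacobiSlash_eq_self_of_generators ?_ ?_ γ <;> ext τ z
  · have hτ := τ.ne_zero
    rw [jacobiSlash, denom_S, D2_S, coe_S_smul, φm21_neg_one_div τ.im_pos, exp_neg,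
      show ((1 : ℤ) * (2 * π * I / τ) * z ^ 2 : ℂ) = 2 * π * I * z ^ 2 / τ by push_cast; ring]
    simp only [neg_neg, zpow_ofNat]
    field_simp
  · have hT := coe_T_zpow_smul 1 τ
    have hdenom := denom_T_zpow 1 τ
    rw [zpow_one] at hT hdenom
    rw [jacobiSlash, hT, hdenom, D2_T]
    simp [φm21_add_one]

theorem jacobiSlash_Z4a_lowerUnipotent_four :
    jacobiSlash 0 1 (lowerUnipotent 4) (fun τ : ℍ ↦ Z4a τ) = fun (τ : ℍ) z ↦ -Z4a τ z := by
  have hf : ((2 : ℂ) • fun τ : ℍ ↦ etaQuotient4a τ) ∣[(2 : ℤ)] lowerUnipotent 4 =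
      -((2 : ℂ) • fun τ : ℍ ↦ etaQuotient4a τ) := by
    rw [ModularForm.SL_smul_slash, etaQuotient4a_slash_lowerUnipotent_four, smul_neg]
  have hZ : (fun τ : ℍ ↦ Z4a τ) =
      fun τ z ↦ ((2 : ℂ) • fun τ : ℍ ↦ etaQuotient4a τ) τ * (fun τ : ℍ ↦ φm21 τ) τ z := rfl
  rw [hZ, show (0 : ℤ) = 2 + -2 from rfl, mul_jacobiSlash, jacobiSlash_φm21, hf]
  ext τ z
  exact neg_mul _ _

end WeakJacobiForm

/-- The slash of Z^{2⁴4⁴} by M_{1/4} = (1,0;4,1) equals −Z^{2⁴4⁴}. -/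
theorem Z4a_slash_M_quarter (τ : ℂ) (hτ : 0 < τ.im) (z : ℂ) :
    Complex.exp (-8 * Real.pi * I * z ^ 2 / (4 * τ + 1)) *
        Z4a (τ / (4 * τ + 1)) (z / (4 * τ + 1)) =
      -Z4a τ z := by
  have hslash := congrFun (congrFun jacobiSlash_Z4a_lowerUnipotent_four ⟨τ, hτ⟩) z
  rw [jacobiSlash, D2_lowerUnipotent, denom_lowerUnipotent, coe_lowerUnipotent_smul] at hslash
  push_cast at hslash
  rw [← hslash, neg_zero, zpow_zero, one_mul]
  congr 2
  ring
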